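/- Let n ≥ 2 and δ ∈ (0, n−1], and let B = {x ∈ ℝⁿ : |x| < 1} be the open unit ball with characteristic function χ_B. Then χ_B ∈ nL¹(ℝⁿ, H̃^δ_∞) and χ_B is Lebesgue measurable, yet there is a constant c > 0 (depending only on n and δ) such that for every x ∈ ∂B one has χ_B(x) = 0 < c ≤ limsup_{r→0⁺} (1/H̃^δ_∞(B(x,r))) ∫_{B(x,r)} χ_B dH̃^δ_∞; since H̃^δ_∞(∂B) > 0, it follows that χ_B is not an nL¹-limit of continuous functions (in particular, continuous functions are not dense in nL¹(ℝⁿ, H̃^δ_∞)). -/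

import Mathlib

open MeasureTheory Set Metric Filter Topology
open scoped ENNReal

noncomputable section

/-- Euclidean space `ℝⁿ`. -/
abbrev En (n : ℕ) : Type := EuclideanSpace ℝ (Fin n)

/-- The half-open dyadic cube `2^k (m + [0,1)ⁿ)`, `k : ℤ`, `m : ℤⁿ`. -/
def dyadicCube (n : ℕ) (k : ℤ) (m : Fin n → ℤ) : Set (En n) :=
  {x | ∀ i, (m i : ℝ) * 2 ^ k ≤ x i ∧ x i < ((m i : ℝ) + 1) * 2 ^ k}

/-- The `δ`-dimensional dyadic Hausdorff content `H̃^δ_∞`: the infimum of `Σ ℓ(Q_i)^δ`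
over all countable collections of dyadic cubes whose union's interior covers `E`. -/
def dyadicContent (n : ℕ) (δ : ℝ) (E : Set (En n)) : ℝ≥0∞ :=
  ⨅ (c : ℕ → ℤ × (Fin n → ℤ))
    (_ : E ⊆ interior (⋃ i, dyadicCube n (c i).1 (c i).2)),
    ∑' i, ENNReal.ofReal (((2 : ℝ) ^ (c i).1) ^ δ)

/-- The Choquet integral `∫_Ω f dH̃^δ_∞ := ∫_0^∞ H̃^δ_∞({x ∈ Ω : f x > t}) dt`
of a `[0,∞]`-valued function over `Ω ⊆ ℝⁿ`. -/
def choquetIntegral (n : ℕ) (δ : ℝ) (Ω : Set (En n)) (f : En n → ℝ≥0∞) : ℝ≥0∞ :=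
  ∫⁻ t in Ioi (0 : ℝ), dyadicContent n δ {x | x ∈ Ω ∧ ENNReal.ofReal t < f x}

/-- The Choquet integral `∫_Ω |f| dH̃^δ_∞` of a real-valued function. -/
def choquetIntegralAbs (n : ℕ) (δ : ℝ) (Ω : Set (En n)) (f : En n → ℝ) : ℝ≥0∞ :=
  choquetIntegral n δ Ω (fun x => ENNReal.ofReal |f x|)

/-- The Choquet integral `∫_Ω |f| dH̃^δ_∞` of an extended-real-valued function. -/
def choquetIntegralEAbs (n : ℕ) (δ : ℝ) (Ω : Set (En n)) (f : En n → EReal) : ℝ≥0∞ :=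
  choquetIntegral n δ Ω (fun x => (f x).abs)

/-- The ball average `f^δ_{B(x,r)} := (1/H̃^δ_∞(B(x,r))) ∫_{B(x,r)} f dH̃^δ_∞`. -/
def ballAvg (n : ℕ) (δ : ℝ) (f : En n → ℝ≥0∞) (x : En n) (r : ℝ) : ℝ≥0∞ :=
  choquetIntegral n δ (ball x r) f / dyadicContent n δ (ball x r)

/-- The Hausdorff-content centred maximal function `M^δ f(x)`. -/
def maximal (n : ℕ) (δ : ℝ) (f : En n → ℝ≥0∞) (x : En n) : ℝ≥0∞ :=
  ⨆ (r : ℝ) (_ : 0 < r), ballAvg n δ f x r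

/-- `f^δ_*(x) := limsup_{r→0⁺} (1/H̃^δ_∞(B(x,r))) ∫_{B(x,r)} |f(y) − f(x)| dH̃^δ_∞(y)`. -/
def lebDev (n : ℕ) (δ : ℝ) (f : En n → ℝ) (x : En n) : ℝ≥0∞ :=
  limsup (fun r : ℝ => choquetIntegralAbs n δ (ball x r) (fun y => f y - f x) /
    dyadicContent n δ (ball x r)) (𝓝[>] (0 : ℝ))

/-- `limsup_{r→0⁺} f^δ_{B(x,r)}` of the ball averages. -/
def limsupAvg (n : ℕ) (δ : ℝ) (f : En n → ℝ≥0∞) (x : En n) : ℝ≥0∞ :=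
  limsup (fun r : ℝ => ballAvg n δ f x r) (𝓝[>] (0 : ℝ))

/-!
A dyadic cube of side `ℓ` casts, on any `d` of the coordinates, a shadow of Lebesgue measure at most
`ℓ ^ d`. By the mass distribution principle, a set whose shadow contains a cube of side `b`
therefore has `δ`-content at least `b ^ δ` whenever `δ ≤ d`.

With `d = n` this bounds the content of balls from below, matching the upper bound given by `3 ^ n`
dyadic cubes. For `x ∈ ∂B` the set `B(x, r) ∩ B` contains a ball of radius `r / 2`, so the averages
of `χ_B` at `x` stay bounded away from `0`.

With `d = n - 1` it bounds the content of every set `E` separating a bounded set `B` from its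
complement, because each line meeting `B` leaves `B`, and so meets `E`. If `φ` is continuous then
`{|χ_B - φ| ≥ 1/2}` is such a separating set, so `φ` is never close to `χ_B` in `nL¹`.
-/

variable {n : ℕ} {δ : ℝ}

section Content

theorem dyadicContent_mono {E F : Set (En n)} (h : E ⊆ F) :
    dyadicContent n δ E ≤ dyadicContent n δ F :=
  le_iInf₂ fun c hc => iInf₂_le c (h.trans hc)

theorem exists_two_zpow_rpow_lt (hδ : 0 < δ) {ε : ℝ} (hε : 0 < ε) :
    ∃ k : ℤ, ((2 : ℝ) ^ k) ^ δ < ε := by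
  obtain ⟨k, hk, -⟩ := exists_mem_Ioc_zpow (Real.rpow_pos_of_pos hε δ⁻¹) (one_lt_two (α := ℝ))
  exact ⟨k, (Real.lt_rpow_inv_iff_of_pos (by positivity) hε.le hδ).1 hk⟩

-- Coverings in `dyadicContent` are indexed by `ℕ`; other index types are padded with cubes of
-- arbitrarily small total cost.
theorem dyadicContent_le_tsum {ι : Type*} [Countable ι] (hδ : 0 < δ) {E : Set (En n)}
    (c : ι → ℤ × (Fin n → ℤ)) (hc : E ⊆ interior (⋃ i, dyadicCube n (c i).1 (c i).2)) :
    dyadicContent n δ E ≤ ∑' i, ENNReal.ofReal (((2 : ℝ) ^ (c i).1) ^ δ) := by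
  refine ENNReal.le_of_forall_pos_le_add fun ε hε _ => ?_
  obtain ⟨ε', hε', hsum⟩ :=
    ENNReal.exists_pos_sum_of_countable (ENNReal.coe_ne_zero.2 hε.ne') ℕ
  choose k hk using fun i => exists_two_zpow_rpow_lt hδ (NNReal.coe_pos.2 (hε' i))
  obtain ⟨e⟩ : Nonempty (ℕ ≃ ι ⊕ ℕ) := nonempty_equiv_of_countable
  let c' : ι ⊕ ℕ → ℤ × (Fin n → ℤ) := Sum.elim c fun i => (k i, 0)
  have hcover : E ⊆ interior (⋃ i, dyadicCube n (c' (e i)).1 (c' (e i)).2) :=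
    hc.trans <| interior_mono <| iUnion_subset fun i =>
      subset_iUnion_of_subset (e.symm (.inl i)) (by simp [c'])
  calc dyadicContent n δ E
      ≤ ∑' i, ENNReal.ofReal (((2 : ℝ) ^ (c' (e i)).1) ^ δ) := iInf₂_le (c' ∘ e) hcover
    _ = ∑' p, ENNReal.ofReal (((2 : ℝ) ^ (c' p).1) ^ δ) :=
        e.tsum_eq fun p => ENNReal.ofReal (((2 : ℝ) ^ (c' p).1) ^ δ)
    _ = ∑' i, ENNReal.ofReal (((2 : ℝ) ^ (c i).1) ^ δ) +
          ∑' i, ENNReal.ofReal (((2 : ℝ) ^ k i) ^ δ) :=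
        ENNReal.summable.tsum_sum ENNReal.summable
    _ ≤ ∑' i, ENNReal.ofReal (((2 : ℝ) ^ (c i).1) ^ δ) + ε := by
        gcongr
        refine (ENNReal.tsum_le_tsum fun i => ?_).trans hsum.le
        exact ENNReal.ofReal_le_of_le_toReal (hk i).le

theorem dyadicContent_empty (hδ : 0 < δ) : dyadicContent n δ ∅ = 0 := by
  simpa using dyadicContent_le_tsum (n := n) hδ (ι := Empty) Empty.elim (empty_subset _)

theorem mem_dyadicCube_iff {k : ℤ} {m : Fin n → ℤ} {x : En n} :
    x ∈ dyadicCube n k m ↔ ∀ i, ⌊x i / 2 ^ k⌋ = m i := by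
  have h2 : (0 : ℝ) < 2 ^ k := by positivity
  simp only [dyadicCube, mem_ofPred_eq, Int.floor_eq_iff, le_div_iff₀ h2, div_lt_iff₀ h2]

theorem ball_subset_iUnion_dyadicCube (x : En n) {r : ℝ} {k : ℤ} (hr : r ≤ 2 ^ k) :
    ball x r ⊆ ⋃ m : Finset.Icc (fun i => ⌊x i / 2 ^ k⌋ - 1) (fun i => ⌊x i / 2 ^ k⌋ + 1),
      dyadicCube n k m := by
  intro y hy
  have hfloor (i : Fin n) :
      ⌊x i / 2 ^ k⌋ - 1 ≤ ⌊y i / 2 ^ k⌋ ∧ ⌊y i / 2 ^ k⌋ ≤ ⌊x i / 2 ^ k⌋ + 1 := by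
    have hi : |y i - x i| < 2 ^ k :=
      (PiLp.norm_apply_le (y - x) i).trans_lt ((mem_ball_iff_norm.1 hy).trans_le hr)
    have hdiv : |y i / 2 ^ k - x i / 2 ^ k| < 1 := by
      rwa [← sub_div, abs_div, abs_of_pos (by positivity : (0 : ℝ) < 2 ^ k),
        div_lt_one (by positivity)]
    rw [abs_lt] at hdiv
    rw [← Int.floor_sub_one, ← Int.floor_add_one]
    constructor <;> exact Int.floor_le_floor (by linarith)
  refine mem_iUnion.2 ⟨⟨fun i => ⌊y i / 2 ^ k⌋, ?_⟩, mem_dyadicCube_iff.2 fun _ => rfl⟩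
  exact Finset.mem_Icc.2 ⟨fun i => (hfloor i).1, fun i => (hfloor i).2⟩

theorem dyadicContent_ball_le (hδ : 0 < δ) (x : En n) {r : ℝ} (hr : 0 < r) :
    dyadicContent n δ (ball x r) ≤ ENNReal.ofReal (3 ^ n * (2 * r) ^ δ) := by
  obtain ⟨k, hk, hkr⟩ := exists_mem_Ioc_zpow hr (one_lt_two (α := ℝ))
  have hside : (2 : ℝ) ^ (k + 1) ≤ 2 * r := by rw [zpow_add_one₀ two_ne_zero]; linarith
  let I := Finset.Icc (fun i => ⌊x i / 2 ^ (k + 1)⌋ - 1) (fun i => ⌊x i / 2 ^ (k + 1)⌋ + 1)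
  have hcard : I.card = 3 ^ n := by
    simp [I, Pi.card_Icc, show ∀ a : ℤ, a + 1 + 1 - (a - 1) = 3 by intro a; ring]
  calc dyadicContent n δ (ball x r)
      ≤ ∑' _ : I, ENNReal.ofReal (((2 : ℝ) ^ (k + 1)) ^ δ) :=
        dyadicContent_le_tsum hδ (fun m : I => (k + 1, m.1))
          (interior_maximal (ball_subset_iUnion_dyadicCube x hkr) isOpen_ball)
    _ = ENNReal.ofReal (3 ^ n * ((2 : ℝ) ^ (k + 1)) ^ δ) := by
        simp [tsum_fintype, hcard, ENNReal.ofReal_mul, ENNReal.ofReal_pow]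
    _ ≤ ENNReal.ofReal (3 ^ n * (2 * r) ^ δ) := by gcongr

theorem dyadicContent_lt_top_of_isBounded (hδ : 0 < δ) {B : Set (En n)}
    (hB : Bornology.IsBounded B) : dyadicContent n δ B < ⊤ := by
  obtain ⟨r, hr, hBr⟩ := hB.subset_ball_lt 0 0
  exact (dyadicContent_mono hBr).trans_lt
    ((dyadicContent_ball_le hδ 0 hr).trans_lt ENNReal.ofReal_lt_top)

theorem outerMeasure_le_dyadicContent (μ : OuterMeasure (En n))
    (hμ : ∀ k m, μ (dyadicCube n k m) ≤ ENNReal.ofReal (((2 : ℝ) ^ k) ^ δ)) (E : Set (En n)) :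
    μ E ≤ dyadicContent n δ E :=
  le_iInf₂ fun c hc =>
    calc μ E ≤ μ (⋃ i, dyadicCube n (c i).1 (c i).2) := measure_mono (hc.trans interior_subset)
      _ ≤ ∑' i, μ (dyadicCube n (c i).1 (c i).2) := measure_iUnion_le _
      _ ≤ ∑' i, ENNReal.ofReal (((2 : ℝ) ^ (c i).1) ^ δ) := ENNReal.tsum_le_tsum fun _ => hμ _ _

end Content

section Projection

variable {ι : Type*}

/-- The projection of `ℝⁿ` onto the coordinates selected by `s`. The target is the plain function
space, whose balls are cubes. -/
def coordProj (s : ι → Fin n) : En n →ₗ[ℝ] ι → ℝ :=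
  LinearMap.funLeft ℝ ℝ s ∘ₗ (WithLp.linearEquiv 2 ℝ (Fin n → ℝ)).toLinearMap

theorem coordProj_surjective {s : ι → Fin n} (hs : Function.Injective s) :
    Function.Surjective (coordProj s) :=
  (LinearMap.funLeft_surjective_of_injective ℝ ℝ s hs).comp (WithLp.linearEquiv 2 ℝ _).surjective

variable [Fintype ι]

theorem volume_coordProj_image_dyadicCube_le (s : ι → Fin n) (k : ℤ) (m : Fin n → ℤ) :
    volume (coordProj s '' dyadicCube n k m) ≤ ENNReal.ofReal ((2 ^ k) ^ Fintype.card ι) := by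
  have hsub : coordProj s '' dyadicCube n k m ⊆
      univ.pi fun i => Ico ((m (s i) : ℝ) * 2 ^ k) ((m (s i) + 1) * 2 ^ k) := by
    rintro _ ⟨x, hx, rfl⟩ i -
    exact hx (s i)
  refine (measure_mono hsub).trans_eq ?_
  rw [Real.volume_pi_Ico, ENNReal.ofReal_pow (by positivity)]
  simp [add_mul]

theorem rpow_sub_mul_min_pow_le {a b : ℝ} (ha : 0 < a) (hb : 0 < b) (hδ : 0 ≤ δ) {d : ℕ}
    (hδd : δ ≤ d) : b ^ (δ - d) * min a b ^ d ≤ a ^ δ := by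
  have hmin : 0 < min a b := lt_min ha hb
  have hexp : b ^ (δ - d) ≤ min a b ^ (δ - d) :=
    Real.rpow_le_rpow_of_nonpos hmin (min_le_right a b) (by linarith)
  calc b ^ (δ - d) * min a b ^ d
      ≤ min a b ^ (δ - d) * min a b ^ d := by gcongr
    _ = min a b ^ δ := by rw [← Real.rpow_natCast, ← Real.rpow_add hmin, sub_add_cancel]
    _ ≤ a ^ δ := by gcongr; exact min_le_left a b

theorem le_dyadicContent_of_ball_subset_image (hδ : 0 ≤ δ) {s : ι → Fin n}
    (hδι : δ ≤ Fintype.card ι) {E : Set (En n)} {y : ι → ℝ} {a : ℝ} (ha : 0 < a)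
    (hE : ball y a ⊆ coordProj s '' E) :
    ENNReal.ofReal ((2 * a) ^ δ) ≤ dyadicContent n δ E := by
  set d := Fintype.card ι
  have hb : 0 < 2 * a := by positivity
  let ν : OuterMeasure (En n) :=
    OuterMeasure.comap (coordProj s) (volume.restrict (ball y a)).toOuterMeasure
  have hν (F : Set (En n)) : ν F = volume.restrict (ball y a) (coordProj s '' F) := rfl
  have hcube (k : ℤ) (m : Fin n → ℤ) :
      ν (dyadicCube n k m) ≤ ENNReal.ofReal (min (2 ^ k) (2 * a) ^ d) := by
    rw [hν]
    rcases min_choice ((2 : ℝ) ^ k) (2 * a) with h | h <;> rw [h]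
    · exact (Measure.restrict_apply_le _ _).trans (volume_coordProj_image_dyadicCube_le s k m)
    · refine (measure_mono (subset_univ _)).trans_eq ?_
      rw [Measure.restrict_apply_univ, Real.volume_pi_ball y ha]
  calc ENNReal.ofReal ((2 * a) ^ δ)
      = ENNReal.ofReal ((2 * a) ^ (δ - d)) * volume (ball y a) := by
        rw [Real.volume_pi_ball y ha, ← ENNReal.ofReal_mul (by positivity), ← Real.rpow_natCast,
          ← Real.rpow_add hb, sub_add_cancel]
    _ ≤ ENNReal.ofReal ((2 * a) ^ (δ - d)) * ν E := by
        rw [hν, ← Measure.restrict_apply_self volume (ball y a)]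
        gcongr
    _ ≤ dyadicContent n δ E := by
        refine outerMeasure_le_dyadicContent (ENNReal.ofReal ((2 * a) ^ (δ - d)) • ν)
          (fun k m => ?_) E
        refine (mul_le_mul_right (hcube k m) _).trans ?_
        rw [← ENNReal.ofReal_mul (by positivity)]
        exact ENNReal.ofReal_le_ofReal (rpow_sub_mul_min_pow_le (by positivity) hb hδ hδι)

theorem ball_subset_coordProj_id_image (hn : 0 < n) (x : En n) (r : ℝ) :
    ball (coordProj id x) (r / √n) ⊆ coordProj id '' ball x r := by
  intro y hy
  refine ⟨WithLp.toLp 2 y, ?_, rfl⟩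
  have hlip := (PiLp.lipschitzWith_toLp 2 fun _ : Fin n => ℝ).dist_le_mul y (coordProj id x)
  refine hlip.trans_lt ?_
  rw [mem_ball, lt_div_iff₀ (by positivity), mul_comm] at hy
  simpa [Real.sqrt_eq_rpow] using hy

theorem le_dyadicContent_ball (hδ : 0 < δ) (hδn : δ ≤ n) (x : En n) {r : ℝ} (hr : 0 < r) :
    ENNReal.ofReal ((2 * (r / √n)) ^ δ) ≤ dyadicContent n δ (ball x r) := by
  have hn : 0 < n := by exact_mod_cast hδ.trans_le hδn
  exact le_dyadicContent_of_ball_subset_image hδ.le (by simpa using hδn) (by positivity)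
    (ball_subset_coordProj_id_image hn x r)

end Projection

section Separation

variable {X : Type*} [TopologicalSpace X]

/-- `E` separates `B` from its complement: a connected set cannot pass from `B` to `Bᶜ` without
meeting `E`. -/
def Separates (E B : Set X) : Prop :=
  ∀ K, IsPreconnected K → (K ∩ B).Nonempty → (K \ B).Nonempty → (K ∩ E).Nonempty

theorem separates_frontier (B : Set X) : Separates (frontier B) B := by
  rintro K hK ⟨p, hpK, hpB⟩ ⟨q, hqK, hqB⟩
  by_contra! hE
  have hint (x : X) (hx : x ∈ K) (hxB : x ∈ closure B) : x ∈ interior B :=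
    by_contra fun h => hE.subset ⟨hx, hxB, h⟩
  have hcover : K ⊆ interior B ∪ (closure B)ᶜ := fun x hx =>
    or_iff_not_imp_right.2 fun h => hint x hx (not_not.1 h)
  obtain ⟨x, -, hx, hx'⟩ := hK _ _ isOpen_interior isClosed_closure.isOpen_compl hcover
    ⟨p, hpK, hint p hpK (subset_closure hpB)⟩
    ⟨q, hqK, fun h => hqB (interior_subset (hint q hqK h))⟩
  exact hx' (subset_closure (interior_subset hx))

theorem separates_half_le_abs_indicator_sub (B : Set X) {φ : X → ℝ} (hφ : Continuous φ) :
    Separates {x | 1 / 2 ≤ |B.indicator (fun _ => (1 : ℝ)) x - φ x|} B := by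
  rintro K hK ⟨p, hpK, hpB⟩ ⟨q, hqK, hqB⟩
  by_contra! hE
  have hlt (x : X) (hx : x ∈ K) : |B.indicator (fun _ => (1 : ℝ)) x - φ x| < 1 / 2 :=
    not_le.1 fun h => hE.subset ⟨hx, h⟩
  have hp := hlt p hpK
  have hq := hlt q hqK
  rw [indicator_of_mem hpB, abs_lt] at hp
  rw [indicator_of_notMem hqB, abs_lt] at hq
  obtain ⟨x, hxK, hx⟩ : (1 / 2 : ℝ) ∈ φ '' K :=
    hK.intermediate_value hqK hpK hφ.continuousOn ⟨by linarith, by linarith⟩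
  have hxK' := hlt x hxK
  by_cases hxB : x ∈ B <;> norm_num [hxB, hx] at hxK'

variable {V W : Type*} [NormedAddCommGroup V] [NormedSpace ℝ V] [AddCommGroup W] [Module ℝ W]

theorem exists_notMem_map_eq_of_isBounded {f : V →ₗ[ℝ] W} (hf : f.ker ≠ ⊥) {B : Set V}
    (hB : Bornology.IsBounded B) (p : V) : ∃ q ∉ B, f q = f p := by
  obtain ⟨R, hR⟩ := hB.subset_closedBall p
  have : Nontrivial f.ker := Submodule.nontrivial_iff_ne_bot.2 hf
  obtain ⟨v, hv⟩ := NormedSpace.exists_lt_norm ℝ f.ker R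
  refine ⟨p + v, fun h => hv.not_ge ?_, by simp⟩
  simpa using hR h

theorem Separates.image_subset_image {f : V →ₗ[ℝ] W} (hf : f.ker ≠ ⊥) {B E : Set V}
    (hB : Bornology.IsBounded B) (hE : Separates E B) : f '' B ⊆ f '' E := by
  rintro _ ⟨p, hp, rfl⟩
  obtain ⟨q, hq, hqp⟩ := exists_notMem_map_eq_of_isBounded hf hB p
  have hfibre : Convex ℝ (f ⁻¹' {f p}) := (convex_singleton (f p)).linear_preimage f
  obtain ⟨x, hxp, hxE⟩ := hE _ hfibre.isPreconnected ⟨p, rfl, hp⟩ ⟨q, hqp, hq⟩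
  exact ⟨x, hxE, hxp⟩

theorem exists_pos_forall_separates_le_dyadicContent (hδ : 0 < δ) (hδn : δ ≤ (n : ℝ) - 1)
    {B : Set (En n)} (hB : Bornology.IsBounded B) (hBint : (interior B).Nonempty) :
    ∃ c > 0, ∀ E, Separates E B → c ≤ dyadicContent n δ E := by
  obtain ⟨m, rfl⟩ : ∃ m, n = m + 1 :=
    Nat.exists_eq_succ_of_ne_zero (by rintro rfl; norm_num at hδn; linarith)
  push_cast at hδn
  let π := coordProj (Fin.castSucc (n := m))
  have hker : π.ker ≠ ⊥ := LinearMap.ker_ne_bot_of_finrank_lt (by simp)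
  have hopen : IsOpen (π '' interior B) :=
    π.isOpenMap_of_finiteDimensional (coordProj_surjective (Fin.castSucc_injective m)) _
      isOpen_interior
  obtain ⟨p, hp⟩ := hBint
  obtain ⟨a, ha, hball⟩ := Metric.isOpen_iff.1 hopen (π p) (mem_image_of_mem π hp)
  refine ⟨ENNReal.ofReal ((2 * a) ^ δ), ENNReal.ofReal_pos.2 (by positivity), fun E hE => ?_⟩
  have hδm : δ ≤ Fintype.card (Fin m) := by simpa using hδn
  exact le_dyadicContent_of_ball_subset_image hδ.le hδm ha <|
    hball.trans ((image_mono interior_subset).trans (hE.image_subset_image hker hB))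

end Separation

section ChoquetIntegral

theorem choquetIntegralAbs_indicator_const (hδ : 0 < δ) (Ω B : Set (En n)) (a : ℝ) :
    choquetIntegralAbs n δ Ω (B.indicator fun _ => a) =
      dyadicContent n δ (Ω ∩ B) * ENNReal.ofReal |a| := by
  have hlevel : ∀ t ∈ Ioi (0 : ℝ), dyadicContent n δ
      {x | x ∈ Ω ∧ ENNReal.ofReal t < ENNReal.ofReal |B.indicator (fun _ => a) x|} =
      (Iio |a|).indicator (fun _ => dyadicContent n δ (Ω ∩ B)) t := by
    intro t ht
    simp only [ENNReal.ofReal_lt_ofReal_iff_of_nonneg (le_of_lt ht)]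
    by_cases hta : t < |a|
    · rw [indicator_of_mem (mem_Iio.2 hta)]
      congr 1
      ext x
      by_cases hx : x ∈ B <;> simp [hx, hta, (mem_Ioi.1 ht).le]
    · rw [indicator_of_notMem (by simpa using hta), ← dyadicContent_empty (n := n) hδ]
      congr 1
      ext x
      by_cases hx : x ∈ B <;> simp [hx, not_lt.1 hta, (mem_Ioi.1 ht).le]
  unfold choquetIntegralAbs choquetIntegral
  rw [setLIntegral_congr_fun measurableSet_Ioi hlevel, lintegral_indicator measurableSet_Iio,
    setLIntegral_const, Measure.restrict_apply measurableSet_Iio, Iio_inter_Ioi, Real.volume_Ioo,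
    sub_zero]

theorem ofReal_mul_dyadicContent_le_choquetIntegral (Ω : Set (En n)) (f : En n → ℝ≥0∞) (a : ℝ) :
    ENNReal.ofReal a * dyadicContent n δ {x | x ∈ Ω ∧ ENNReal.ofReal a ≤ f x} ≤
      choquetIntegral n δ Ω f :=
  calc ENNReal.ofReal a * dyadicContent n δ {x | x ∈ Ω ∧ ENNReal.ofReal a ≤ f x}
      = ∫⁻ _ in Ioo 0 a, dyadicContent n δ {x | x ∈ Ω ∧ ENNReal.ofReal a ≤ f x} := by
        rw [setLIntegral_const, Real.volume_Ioo, sub_zero, mul_comm]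
    _ ≤ ∫⁻ t in Ioo 0 a, dyadicContent n δ {x | x ∈ Ω ∧ ENNReal.ofReal t < f x} := by
        refine setLIntegral_mono' measurableSet_Ioo fun t ht => dyadicContent_mono fun x hx => ?_
        have hta := (ENNReal.ofReal_lt_ofReal_iff_of_nonneg ht.1.le).2 ht.2
        exact ⟨hx.1, hta.trans_le hx.2⟩
    _ ≤ choquetIntegral n δ Ω f := lintegral_mono_set Ioo_subset_Ioi_self

theorem exists_pos_forall_le_choquetIntegralAbs_indicator_sub (hδ : 0 < δ)
    (hδn : δ ≤ (n : ℝ) - 1) {B : Set (En n)} (hB : Bornology.IsBounded B)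
    (hBint : (interior B).Nonempty) :
    ∃ c > 0, ∀ φ : En n → ℝ, Continuous φ →
      c ≤ choquetIntegralAbs n δ univ fun x => B.indicator (fun _ => 1) x - φ x := by
  obtain ⟨c, hc, hsep⟩ := exists_pos_forall_separates_le_dyadicContent hδ hδn hB hBint
  refine ⟨ENNReal.ofReal (1 / 2) * c, ENNReal.mul_pos (by simp) hc.ne', fun φ hφ => ?_⟩
  refine le_trans ?_ (ofReal_mul_dyadicContent_le_choquetIntegral univ _ (1 / 2))
  gcongr
  simp only [mem_univ, true_and, ENNReal.ofReal_le_ofReal_iff (abs_nonneg _)]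
  exact hsep _ (separates_half_le_abs_indicator_sub B hφ)

end ChoquetIntegral

section BallAverages

theorem le_ballAvg_indicator (hδ : 0 < δ) (hδn : δ ≤ n) {B : Set (En n)} {x z : En n} {r θ : ℝ}
    (hr : 0 < r) (hθ : 0 < θ) (hz : ball z (θ * r) ⊆ ball x r ∩ B) :
    ENNReal.ofReal ((θ / √n) ^ δ / 3 ^ n) ≤
      ballAvg n δ (fun y => ENNReal.ofReal |B.indicator (fun _ => 1) y|) x r := by
  have hn : 0 < n := by exact_mod_cast hδ.trans_le hδn
  have hlower := (le_dyadicContent_ball hδ hδn z (mul_pos hθ hr)).trans (dyadicContent_mono hz)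
  have hupper := dyadicContent_ball_le hδ x hr
  have hratio : (θ / √n) ^ δ / 3 ^ n = (2 * (θ * r / √n)) ^ δ / (3 ^ n * (2 * r) ^ δ) := by
    rw [show 2 * (θ * r / √n) = θ / √n * (2 * r) by ring,
      Real.mul_rpow (by positivity) (by positivity), mul_div_mul_right _ _ (by positivity)]
  rw [hratio, ENNReal.ofReal_div_of_pos (by positivity)]
  have havg : choquetIntegral n δ (ball x r)
      (fun y => ENNReal.ofReal |B.indicator (fun _ => 1) y|) = dyadicContent n δ (ball x r ∩ B) :=
    (choquetIntegralAbs_indicator_const hδ _ B 1).trans (by simp)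
  rw [ballAvg, havg]
  exact ENNReal.div_le_div hlower hupper

theorem exists_ball_subset_ball_inter_ball {V : Type*} [SeminormedAddCommGroup V]
    [NormedSpace ℝ V] {c x : V} {R r : ℝ} (hx : x ∈ sphere c R) (hr : 0 < r) (hrR : r ≤ 2 * R) :
    ∃ z, ball z (1 / 2 * r) ⊆ ball x r ∩ ball c R := by
  have hR : 0 < R := by linarith
  have ht : r / (2 * R) ≤ 1 := (div_le_one (by positivity)).2 hrR
  refine ⟨AffineMap.lineMap x c (r / (2 * R)),
    subset_inter (ball_subset_ball' ?_) (ball_subset_ball' ?_)⟩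
  · rw [dist_lineMap_left, mem_sphere.1 hx, Real.norm_of_nonneg (by positivity)]
    field_simp
    norm_num
  · rw [dist_lineMap_right, mem_sphere.1 hx, Real.norm_of_nonneg (by linarith)]
    field_simp
    norm_num

theorem le_limsupAvg_indicator_ball (hδ : 0 < δ) (hδn : δ ≤ n) {c x : En n} {R : ℝ}
    (hR : 0 < R) (hx : x ∈ sphere c R) :
    ENNReal.ofReal ((1 / 2 / √n) ^ δ / 3 ^ n) ≤
      limsupAvg n δ (fun y => ENNReal.ofReal |(ball c R).indicator (fun _ => 1) y|) x := by
  refine le_limsup_of_frequently_le (Eventually.frequently ?_)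
  filter_upwards [Ioo_mem_nhdsGT (show 0 < 2 * R by positivity)] with r hr
  obtain ⟨z, hz⟩ := exists_ball_subset_ball_inter_ball hx hr.1 hr.2.le
  exact le_ballAvg_indicator hδ hδn hr.1 (by norm_num) hz

end BallAverages

/-- the characteristic function of the unit ball lies in
`nL¹(ℝⁿ, H̃^δ_∞)` for `0 < δ ≤ n − 1`, is Lebesgue measurable, but fails the Lebesgue
point property at every boundary point (with a uniform positive lower bound for the
limsup of averages); since `H̃^δ_∞(∂B) > 0`, it is not an `nL¹`-limit of continuous
functions, so continuous functions are not dense in `nL¹(ℝⁿ, H̃^δ_∞)`. -/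
theorem char_ball_not_nL1_limit (n : ℕ) (hn : 2 ≤ n)
    (δ : ℝ) (hδ0 : 0 < δ) (hδn : δ ≤ (n : ℝ) - 1)
    (χB : En n → ℝ) (hχB : χB = (ball (0 : En n) 1).indicator (fun _ => (1 : ℝ))) :
    choquetIntegralAbs n δ univ χB < ⊤ ∧
    NullMeasurable χB (volume : Measure (En n)) ∧
    (∃ c : ℝ, 0 < c ∧ ∀ x ∈ sphere (0 : En n) 1, χB x = 0 ∧
      ENNReal.ofReal c ≤ limsupAvg n δ (fun y => ENNReal.ofReal |χB y|) x) ∧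
    0 < dyadicContent n δ (sphere (0 : En n) 1) ∧
    ¬ (∃ φ : ℕ → En n → ℝ, (∀ i, Continuous (φ i)) ∧
      Tendsto (fun i => choquetIntegralAbs n δ univ (fun x => χB x - φ i x))
        atTop (𝓝 0)) := by
  subst hχB
  have hB : Bornology.IsBounded (ball (0 : En n) 1) := isBounded_ball
  have hBint : (interior (ball (0 : En n) 1)).Nonempty := by simp [isOpen_ball.interior_eq]
  refine ⟨?_, ?_, ?_, ?_, ?_⟩
  · simpa [choquetIntegralAbs_indicator_const hδ0] using dyadicContent_lt_top_of_isBounded hδ0 hB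
  · exact (measurable_const.indicator measurableSet_ball).nullMeasurable
  · have : 0 < n := by omega
    refine ⟨(1 / 2 / √n) ^ δ / 3 ^ n, by positivity, fun x hx => ⟨?_, ?_⟩⟩
    · exact indicator_of_notMem (by simp [mem_sphere.1 hx]) _
    · exact le_limsupAvg_indicator_ball hδ0 (by linarith) one_pos hx
  · obtain ⟨c, hc, hsep⟩ := exists_pos_forall_separates_le_dyadicContent hδ0 hδn hB hBint
    have hsphere := frontier_ball (0 : En n) one_ne_zero
    exact hc.trans_le (hsep _ (hsphere ▸ separates_frontier _))
  · rintro ⟨φ, hφ, hlim⟩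
    obtain ⟨c, hc, hle⟩ := exists_pos_forall_le_choquetIntegralAbs_indicator_sub hδ0 hδn hB hBint
    exact hc.not_ge (ge_of_tendsto' hlim fun i => hle (φ i) (hφ i))
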